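/- Let f, g : I → ℝ be strictly monotone and differentiable with f'(x) ≠ 0 and g'(x) ≠ 0 for all x ∈ I, and suppose f and g have opposite monotonicity (one strictly increasing, the other strictly decreasing). Then A^[f] ≤ A^[g] if and only if the function x ↦ f'(x)/g'(x) is non-decreasing on I. -/

import Mathlib

/-!
Replacing `(f, g)` by `(-f, -g)` changes neither the means nor the ratio `f'/g'`, so `f` may be
taken decreasing and `g` increasing. Let `h = f ∘ g⁻¹`, defined on the interval `J = g(I)`.
Applying the decreasing `f` to `A^[f](a) ≤ A^[g](a)` and writing `yᵢ = g(aᵢ)` turns the inequality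
into `h(mean y) ≤ mean h(y)`, Jensen's inequality with equal weights
(`qamLE_iff_jensen`). For continuous `h` this is equivalent to convexity, since repeating points
gives all rational weights (`convexOn_of_jensen`). By the inverse function rule `h` has derivative
`f'(x)/g'(x)` at `g(x)`, also one-sidedly at endpoints (`hasDerivWithinAt_comp_invFunOn`), so
convexity of `h` means that `f'/g'` is non-decreasing along the increasing function `g`.
-/

open Set Function Filter

/-- The quasi-arithmetic mean generated by `f` on the interval `I`,
applied to a vector `a ∈ Iⁿ`: `f⁻¹((f a₁ + ⋯ + f aₙ)/n)`, where the
inverse of `f` is taken on `I`. -/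
noncomputable def qam (I : Set ℝ) (f : ℝ → ℝ) {n : ℕ} (a : Fin n → ℝ) : ℝ :=
  Function.invFunOn f I ((∑ i, f (a i)) / n)

/-- The natural (pointwise) partial order on quasi-arithmetic means:
`A^[f] ≤ A^[g]` iff `A^[f](a) ≤ A^[g](a)` for every `n ≥ 1` and every `a ∈ Iⁿ`. -/
def qamLE (I : Set ℝ) (f g : ℝ → ℝ) : Prop :=
  ∀ n : ℕ, 1 ≤ n → ∀ a : Fin n → ℝ, (∀ i, a i ∈ I) → qam I f a ≤ qam I g a

/-- `A^[f] = A^[g]` : equality of the two quasi-arithmetic means as means. -/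
def qamEQ (I : Set ℝ) (f g : ℝ → ℝ) : Prop :=
  ∀ n : ℕ, 1 ≤ n → ∀ a : Fin n → ℝ, (∀ i, a i ∈ I) → qam I f a = qam I g a

/-- `f` is strictly monotone on `I` (strictly increasing or strictly decreasing). -/
def StrictMonoOrAntiOn (f : ℝ → ℝ) (I : Set ℝ) : Prop :=
  StrictMonoOn f I ∨ StrictAntiOn f I

open scoped Topology

lemma invFunOn_apply_of_injOn {I : Set ℝ} {f : ℝ → ℝ} (hf : InjOn f I) {x : ℝ} (hx : x ∈ I) :
    invFunOn f I (f x) = x :=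
  hf.leftInvOn_invFunOn hx

lemma mean_mem {J : Set ℝ} (hJ : Convex ℝ J) {n : ℕ} (hn : 1 ≤ n) {y : Fin n → ℝ}
    (hy : ∀ i, y i ∈ J) : (∑ i, y i) / n ∈ J := by
  have hn' : (n : ℝ) ≠ 0 := by positivity
  have := hJ.sum_mem (t := Finset.univ) (w := fun _ : Fin n => (1 / n : ℝ)) (z := y)
    (fun _ _ => by positivity) (by simp [hn']) (fun i _ => hy i)
  convert this using 1
  simp only [smul_eq_mul, ← Finset.mul_sum]
  ring

lemma convex_image_of_continuousOn {I : Set ℝ} (hI : I.OrdConnected) {f : ℝ → ℝ}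
    (hf : ContinuousOn f I) : Convex ℝ (f '' I) :=
  (hI.isPreconnected.image f hf).ordConnected.convex

/-- The quasi-arithmetic mean as the point of `I` characterised by its `f`-value. -/
lemma qam_spec {I : Set ℝ} (hI : I.OrdConnected) {f : ℝ → ℝ} (hf : ContinuousOn f I) {n : ℕ}
    (hn : 1 ≤ n) {a : Fin n → ℝ} (ha : ∀ i, a i ∈ I) :
    qam I f a ∈ I ∧ f (qam I f a) = (∑ i, f (a i)) / n := by
  have h : (∑ i, f (a i)) / n ∈ f '' I :=
    mean_mem (convex_image_of_continuousOn hI hf) hn fun i => mem_image_of_mem f (ha i)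
  exact ⟨invFunOn_mem h, invFunOn_eq h⟩

lemma qam_neg {I : Set ℝ} (hI : I.OrdConnected) {f : ℝ → ℝ} (hf : ContinuousOn f I)
    (hinj : InjOn f I) {n : ℕ} (hn : 1 ≤ n) {a : Fin n → ℝ} (ha : ∀ i, a i ∈ I) :
    qam I (-f) a = qam I f a := by
  obtain ⟨h1, h2⟩ := qam_spec hI hf hn ha
  obtain ⟨h3, h4⟩ := qam_spec hI hf.neg hn ha
  refine hinj h3 h1 ?_
  simp only [Pi.neg_apply, Finset.sum_neg_distrib, neg_div] at h4
  exact (neg_injective h4).trans h2.symm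

lemma qamLE_neg {I : Set ℝ} (hI : I.OrdConnected) {f g : ℝ → ℝ} (hf : ContinuousOn f I)
    (hg : ContinuousOn g I) (hfi : InjOn f I) (hgi : InjOn g I) :
    qamLE I (-f) (-g) ↔ qamLE I f g := by
  refine forall₄_congr fun n hn a ha => ?_
  rw [qam_neg hI hf hfi hn ha, qam_neg hI hg hgi hn ha]

/-- For `f` decreasing, comparison of the means is Jensen's inequality with equal weights for
`f ∘ g⁻¹` on `g(I)`. -/
lemma qamLE_iff_jensen {I : Set ℝ} (hI : I.OrdConnected) {f g : ℝ → ℝ} (hf : ContinuousOn f I)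
    (hg : ContinuousOn g I) (hfa : StrictAntiOn f I) (hgi : InjOn g I) :
    qamLE I f g ↔ ∀ n : ℕ, 1 ≤ n → ∀ y : Fin n → ℝ, (∀ i, y i ∈ g '' I) →
      f (invFunOn g I ((∑ i, y i) / n)) ≤ (∑ i, f (invFunOn g I (y i))) / n := by
  constructor
  · intro h n hn y hy
    have ha : ∀ i, invFunOn g I (y i) ∈ I := fun i => invFunOn_mem (hy i)
    have key := h n hn (fun i => invFunOn g I (y i)) ha
    rw [← (qam_spec hI hf hn ha).2]
    have e : ∀ i, g (invFunOn g I (y i)) = y i := fun i => invFunOn_eq (hy i)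
    have := (hfa.le_iff_ge (qam_spec hI hg hn ha).1 (qam_spec hI hf hn ha).1).2 key
    simpa only [qam, e] using this
  · intro h n hn a ha
    have key := h n hn (fun i => g (a i)) fun i => mem_image_of_mem g (ha i)
    simp only [invFunOn_apply_of_injOn hgi (ha _)] at key
    rw [← (qam_spec hI hf hn ha).2] at key
    exact (hfa.le_iff_ge (qam_spec hI hg hn ha).1 (qam_spec hI hf hn ha).1).1 key

lemma sum_fin_ite_lt (n k : ℕ) (hk : k ≤ n) (u v : ℝ) :
    ∑ i : Fin n, (if (i : ℕ) < k then u else v) = k * u + (n - k) * v := by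
  rw [Fin.sum_univ_eq_sum_range (fun i => if i < k then u else v) n]
  obtain ⟨m, rfl⟩ := Nat.exists_eq_add_of_le hk
  rw [Finset.sum_range_add]
  have h1 : ∑ i ∈ Finset.range k, (if i < k then u else v) = k * u := by
    rw [Finset.sum_congr rfl fun i hi => if_pos (Finset.mem_range.1 hi)]
    simp
  rw [h1]
  simp

/-- A continuous function satisfying Jensen's inequality with equal weights is convex: repeating
points yields rational weights, which are dense in `[0, 1]`. -/
lemma convexOn_of_jensen {J : Set ℝ} (hJ : Convex ℝ J) {h : ℝ → ℝ} (hc : ContinuousOn h J)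
    (hh : ∀ n : ℕ, 1 ≤ n → ∀ y : Fin n → ℝ, (∀ i, y i ∈ J) →
      h ((∑ i, y i) / n) ≤ (∑ i, h (y i)) / n) : ConvexOn ℝ J h := by
  refine ⟨hJ, fun x hx y hy s t hs ht hst => ?_⟩
  obtain rfl : t = 1 - s := by linarith
  simp only [smul_eq_mul]
  have hmaps : MapsTo (fun s : ℝ => s * x + (1 - s) * y) (Icc 0 1) J := fun s hs => by
    simpa using hJ hx hy hs.1 (sub_nonneg.2 hs.2) (by ring)
  have hcl : Icc (0 : ℝ) 1 = closure (Ioo 0 1 ∩ range ((↑) : ℚ → ℝ)) := by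
    rw [← closure_Ioo zero_ne_one]
    exact Subset.antisymm
      (closure_minimal (Rat.denseRange_cast.open_subset_closure_inter isOpen_Ioo) isClosed_closure)
      (closure_mono inter_subset_left)
  have hs1 : s ∈ Icc (0 : ℝ) 1 := ⟨hs, by linarith⟩
  rw [hcl] at hs1 hmaps
  refine le_on_closure (f := fun s => h (s * x + (1 - s) * y))
    (g := fun s => s * h x + (1 - s) * h y) ?_ ?_ ?_ hs1
  · rintro _ ⟨⟨hq0, hq1⟩, q, rfl⟩
    -- `q = k / n`: take `k` copies of `x` and `n - k` copies of `y`.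
    obtain ⟨k, hk⟩ := Int.eq_ofNat_of_zero_le (Rat.num_nonneg.2 (Rat.cast_nonneg.1 hq0.le))
    have hn : (0 : ℝ) < q.den := by exact_mod_cast q.den_pos
    have hq : (q : ℝ) = k / q.den := by
      rw [Rat.cast_def, hk]; simp
    have hkn : k ≤ q.den := by
      have : (q : ℝ) ≤ 1 := hq1.le
      rw [hq, div_le_one hn] at this
      exact_mod_cast this
    have key := hh q.den q.den_pos (fun i => if (i : ℕ) < k then x else y)
      (fun i => by split_ifs <;> assumption)
    simp only [apply_ite h, sum_fin_ite_lt _ _ hkn] at key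
    have e : ∀ u v : ℝ, (q : ℝ) * u + (1 - q) * v = (k * u + (q.den - k) * v) / q.den := by
      intro u v
      rw [hq]
      field_simp
    rw [e, e]
    exact key
  · exact hc.comp (by fun_prop) hmaps
  · fun_prop

lemma jensen_of_convexOn {J : Set ℝ} {h : ℝ → ℝ} (hc : ConvexOn ℝ J h) (n : ℕ) (hn : 1 ≤ n)
    (y : Fin n → ℝ) (hy : ∀ i, y i ∈ J) : h ((∑ i, y i) / n) ≤ (∑ i, h (y i)) / n := by
  have hn' : (n : ℝ) ≠ 0 := by positivity
  have := hc.map_sum_le (t := Finset.univ) (w := fun _ : Fin n => (1 / n : ℝ)) (p := y)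
    (fun _ _ => by positivity) (by simp [hn']) (fun i _ => hy i)
  simp only [smul_eq_mul, ← Finset.mul_sum] at this
  simpa [div_eq_inv_mul] using this

lemma continuousOn_invFunOn {I : Set ℝ} (hI : I.OrdConnected) {g : ℝ → ℝ}
    (hg : ContinuousOn g I) (hgm : StrictMonoOn g I) :
    ContinuousOn (invFunOn g I) (g '' I) := by
  have hJ : (g '' I).OrdConnected := (convex_image_of_continuousOn hI hg).ordConnected
  rw [continuousOn_iff_continuous_domRestrict]
  -- An order isomorphism between intervals is a homeomorphism.
  have hc : Continuous (hgm.orderIso g I).symm := (hgm.orderIso g I).symm.continuous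
  convert continuous_subtype_val.comp hc using 1
  ext ⟨_, x, hx, rfl⟩
  have : (hgm.orderIso g I).symm ⟨g x, mem_image_of_mem g hx⟩ = ⟨x, hx⟩ := by
    rw [OrderIso.symm_apply_eq]
    rfl
  simp [this, invFunOn_apply_of_injOn hgm.injOn hx]

lemma hasDerivWithinAt_comp_invFunOn {I : Set ℝ} (hI : I.OrdConnected) {f g f' g' : ℝ → ℝ}
    (hfd : ∀ x ∈ I, HasDerivWithinAt f (f' x) I x)
    (hgd : ∀ x ∈ I, HasDerivWithinAt g (g' x) I x)
    (hg'0 : ∀ x ∈ I, g' x ≠ 0) (hgm : StrictMonoOn g I) {y : ℝ} (hy : y ∈ g '' I) :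
    HasDerivWithinAt (fun y => f (invFunOn g I y))
      (f' (invFunOn g I y) / g' (invFunOn g I y)) (g '' I) y := by
  have hx : invFunOn g I y ∈ I := invFunOn_mem hy
  have hmaps : MapsTo (invFunOn g I) (g '' I) I := fun z hz => invFunOn_mem hz
  have hc : ContinuousOn (invFunOn g I) (g '' I) :=
    continuousOn_invFunOn hI (fun x hx => (hgd x hx).continuousWithinAt) hgm
  have hinv : HasDerivWithinAt (invFunOn g I) (g' (invFunOn g I y))⁻¹ (g '' I) y := by
    have ht : Tendsto (invFunOn g I) (𝓝[g '' I] y) (𝓝[I] (invFunOn g I y)) :=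
      (hc y hy).tendsto_nhdsWithin hmaps
    have hg2 : HasFDerivWithinAt g
        (ContinuousLinearEquiv.unitsEquivAut ℝ (Units.mk0 _ (hg'0 _ hx)) : ℝ →L[ℝ] ℝ) I
        (invFunOn g I y) :=
      hgd _ hx
    exact HasFDerivWithinAt.of_local_left_inverse ht hg2 hy
      (eventually_nhdsWithin_of_forall fun z hz => invFunOn_eq hz)
  rw [div_eq_mul_inv]
  exact (hfd _ hx).comp y hinv hmaps

lemma qamLE_iff_of_anti_of_mono {I : Set ℝ} (hI : I.OrdConnected) {f g f' g' : ℝ → ℝ}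
    (hfd : ∀ x ∈ I, HasDerivWithinAt f (f' x) I x)
    (hgd : ∀ x ∈ I, HasDerivWithinAt g (g' x) I x)
    (hg'0 : ∀ x ∈ I, g' x ≠ 0) (hfa : StrictAntiOn f I) (hgm : StrictMonoOn g I) :
    qamLE I f g ↔ MonotoneOn (fun x => f' x / g' x) I := by
  have hf : ContinuousOn f I := fun x hx => (hfd x hx).continuousWithinAt
  have hg : ContinuousOn g I := fun x hx => (hgd x hx).continuousWithinAt
  have hJ : Convex ℝ (g '' I) := convex_image_of_continuousOn hI hg
  have hd := fun y (hy : y ∈ g '' I) => hasDerivWithinAt_comp_invFunOn hI hfd hgd hg'0 hgm hy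
  have hc : ContinuousOn (fun y => f (invFunOn g I y)) (g '' I) :=
    fun y hy => (hd y hy).continuousWithinAt
  rw [qamLE_iff_jensen hI hf hg hfa hgm.injOn]
  constructor
  · intro h x hx y hy hxy
    have hconv := convexOn_of_jensen hJ hc h
    rcases hxy.eq_or_lt with rfl | hlt
    · exact le_rfl
    have hgx := mem_image_of_mem g hx
    have hgy := mem_image_of_mem g hy
    have h1 := hconv.le_slope_of_hasDerivWithinAt hgx hgy (hgm hx hy hlt) (hd _ hgx)
    have h2 := hconv.slope_le_of_hasDerivWithinAt hgx hgy (hgm hx hy hlt) (hd _ hgy)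
    rw [invFunOn_apply_of_injOn hgm.injOn hx] at h1
    rw [invFunOn_apply_of_injOn hgm.injOn hy] at h2
    exact h1.trans h2
  · intro h
    have hdi : ∀ y ∈ interior (g '' I), HasDerivAt (fun y => f (invFunOn g I y))
        (f' (invFunOn g I y) / g' (invFunOn g I y)) y := fun y hy =>
      (hd y (interior_subset hy)).hasDerivAt (mem_interior_iff_mem_nhds.1 hy)
    refine jensen_of_convexOn (MonotoneOn.convexOn_of_deriv hJ hc
      (fun y hy => (hdi y hy).differentiableAt.differentiableWithinAt) ?_)
    intro y hy z hz hyz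
    rw [(hdi y hy).deriv, (hdi z hz).deriv]
    have hy' := interior_subset hy
    have hz' := interior_subset hz
    refine h (invFunOn_mem hy') (invFunOn_mem hz') ?_
    rw [← hgm.le_iff_le (invFunOn_mem hy') (invFunOn_mem hz'), invFunOn_eq hy', invFunOn_eq hz']
    exact hyz

/-- for differentiable `f, g` with nonvanishing derivatives and of
opposite monotonicity, `A^[f] ≤ A^[g]` iff `f'/g'` is non-decreasing on `I`. -/
theorem qam_le_iff_deriv_ratio_monotone_opposite_monotonicity
    (I : Set ℝ) (hI : I.OrdConnected) (hInontriv : ∃ x ∈ I, ∃ y ∈ I, x < y)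
    (f g f' g' : ℝ → ℝ)
    (hfd : ∀ x ∈ I, HasDerivWithinAt f (f' x) I x)
    (hgd : ∀ x ∈ I, HasDerivWithinAt g (g' x) I x)
    (hf'0 : ∀ x ∈ I, f' x ≠ 0) (hg'0 : ∀ x ∈ I, g' x ≠ 0)
    (hopp : (StrictMonoOn f I ∧ StrictAntiOn g I) ∨
            (StrictAntiOn f I ∧ StrictMonoOn g I)) :
    qamLE I f g ↔ MonotoneOn (fun x => f' x / g' x) I := by
  rcases hopp with ⟨hfm, hga⟩ | ⟨hfa, hgm⟩
  · have hf : ContinuousOn f I := fun x hx => (hfd x hx).continuousWithinAt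
    have hg : ContinuousOn g I := fun x hx => (hgd x hx).continuousWithinAt
    rw [← qamLE_neg hI hf hg hfm.injOn hga.injOn,
      qamLE_iff_of_anti_of_mono hI (f' := fun x => -f' x) (g' := fun x => -g' x)
        (fun x hx => (hfd x hx).neg) (fun x hx => (hgd x hx).neg)
        (fun x hx => neg_ne_zero.2 (hg'0 x hx))
        (fun x hx y hy hxy => neg_lt_neg (hfm hx hy hxy))
        (fun x hx y hy hxy => neg_lt_neg (hga hx hy hxy))]
    simp only [neg_div_neg_eq]
  · exact qamLE_iff_of_anti_of_mono hI hfd hgd hg'0 hfa hgm
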